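/- arXiv:1607.07267 — 7 statements merged into one kernel-verified Lean document; each statement's English description precedes it below -/
import Mathlib

section
/- Let K ∈ ℝ^{p×p} be symmetric positive definite with K_{ij} ≤ 0 for all i ≠ j, and let P be a symmetric sparsity pattern on {1,…,p}×{1,…,p} containing all diagonal pairs (i,i). Define P_K by (P_K)_{ij} = K_{ij} if (i,j) ∈ P and (P_K)_{ij} = 0 otherwise. Then P_K is symmetric positive definite, and for every symmetric positive semidefinite matrix X ∈ ℝ^{p×p} with X_{ij} = 0 whenever (i,j) ∉ P, one has ‖P_K − K‖_F ≤ ‖X − K‖_F, where ‖·‖_F denotes the Frobenius norm. In other words, P_K is the projection of K, in Frobenius norm, onto the set of positive semidefinite matrices vanishing off the pattern P. -/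
open Matrix

/-- The Frobenius norm of a real matrix. -/
noncomputable def frobNorm {p : ℕ} (A : Matrix (Fin p) (Fin p) ℝ) : ℝ :=
  Real.sqrt (∑ i, ∑ j, (A i j) ^ 2)

theorem projection_of_M_matrix_on_sparsity_pattern
    (p : ℕ) (K : Matrix (Fin p) (Fin p) ℝ)
    (hKsymm : Kᵀ = K) (hKpd : K.PosDef)
    (hKoff : ∀ i j, i ≠ j → K i j ≤ 0)
    (P : Set (Fin p × Fin p)) [DecidablePred (· ∈ P)]
    (hPsymm : ∀ i j, (i, j) ∈ P → (j, i) ∈ P)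
    (hPdiag : ∀ i, (i, i) ∈ P)
    (PK : Matrix (Fin p) (Fin p) ℝ)
    (hPK : ∀ i j, PK i j = if (i, j) ∈ P then K i j else 0) :
    PK.PosDef ∧
      ∀ X : Matrix (Fin p) (Fin p) ℝ, X.PosSemidef →
        (∀ i j, (i, j) ∉ P → X i j = 0) →
        frobNorm (PK - K) ≤ frobNorm (X - K) := by
  refine ⟨?_, ?_⟩
  · rw [Matrix.posDef_iff_dotProduct_mulVec]
    refine ⟨?_, ?_⟩
    · ext i j
      have hK : K j i = K i j := congrFun (congrFun hKsymm i) j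
      have hiff : (j, i) ∈ P ↔ (i, j) ∈ P := ⟨hPsymm j i, hPsymm i j⟩
      simp only [Matrix.conjTranspose_apply, star_trivial, hPK, hK, hiff]
    · intro x hx
      have hy : (fun i => |x i|) ≠ 0 := by
        intro h
        apply hx
        funext i
        exact abs_eq_zero.mp (congrFun h i)
      have hpos := (Matrix.posDef_iff_dotProduct_mulVec.mp hKpd).2 hy
      refine lt_of_lt_of_le hpos ?_
      simp only [dotProduct, Matrix.mulVec, Finset.mul_sum, Pi.star_apply, star_trivial]
      refine Finset.sum_le_sum fun i _ => Finset.sum_le_sum fun j _ => ?_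
      rw [hPK]
      by_cases hij : i = j
      · subst hij
        rw [if_pos (hPdiag i)]
        apply le_of_eq
        have := abs_mul_abs_self (x i)
        linear_combination (K i i) * this
      · have hk := hKoff i j hij
        have h1 : x i * x j ≤ |x i| * |x j| := by
          rw [← abs_mul]; exact le_abs_self _
        have h2 : 0 ≤ |x i| * |x j| := by positivity
        split_ifs
        · nlinarith
        · nlinarith
  · intro X _ hX
    unfold frobNorm
    apply Real.sqrt_le_sqrt
    refine Finset.sum_le_sum fun i _ => Finset.sum_le_sum fun j _ => ?_
    simp only [Matrix.sub_apply, hPK]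
    split_ifs with h
    · simpa using sq_nonneg (X i j - K i j)
    · rw [hX i j h]
end

section
/- Let n, m ≥ 1, let H ∈ ℝ^{(n+m)×(n+m)} be symmetric positive semidefinite, let α ∈ (0,1) and κ_M > 0, let B ∈ ℝ^{(n+m)×n} be the block matrix with I_n on top and the m×n zero matrix below, let R = κ_M·I_n, and define L̂ = α·(α BᵀHB + R)^{-1} BᵀH ∈ ℝ^{n×(n+m)}. Then every complex eigenvalue of the matrix I_{n+m} − B·L̂ is real and lies in the half-open interval (0, 1]; in particular the closed-loop dynamics z⁺ = (I_{n+m} − B·L̂) z are marginally stable. -/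
open Matrix

/-- The block matrix with `I_n` on top and the `m × n` zero matrix below. -/
def Bmat (n m : ℕ) : Matrix (Fin n ⊕ Fin m) (Fin n) ℝ :=
  Matrix.of fun p j =>
    match p with
    | Sum.inl i => if i = j then (1 : ℝ) else 0
    | Sum.inr _ => 0

open scoped ComplexOrder MatrixOrder in
lemma exists_sq_aux {k : Type*} [Fintype k] [DecidableEq k] (G : Matrix k k ℝ) (hG : G.PosSemidef) :
    ∃ X : Matrix k k ℝ, G = Xᵀ * X := by
  obtain ⟨X, hX, -, h⟩ :=
    CFC.exists_sqrt_of_isSelfAdjoint_of_quasispectrumRestricts hG.isHermitian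
      (QuasispectrumRestricts.nnreal_of_nonneg hG.nonneg)
  refine ⟨X, ?_⟩
  have : Xᵀ = X := by
    have := hX.star_eq
    rwa [star_eq_conjTranspose, conjTranspose_eq_transpose_of_trivial] at this
  rw [this, ← h]

lemma Bmat_aux (n m : ℕ) : (Bmat n m)ᵀ * Bmat n m = 1 := by
  ext i j
  simp [Matrix.mul_apply, Bmat, Matrix.one_apply]
  try simp [eq_comm]

lemma scalar_aux (α κ g w : ℝ) (hα : 0 < α) (hκ : 0 < κ) (hg : 0 ≤ g) (hw : 0 < w) (μ : ℂ)
    (h : (α : ℂ) * g = (1 - μ) * (α * g + κ * w)) :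
    μ.im = 0 ∧ μ.re ∈ Set.Ioc (0 : ℝ) 1 := by
  have hd : 0 < α * g + κ * w := by positivity
  have hm : μ = ((κ * w / (α * g + κ * w) : ℝ) : ℂ) := by
    have : ((α * g + κ * w : ℝ) : ℂ) ≠ 0 := by exact_mod_cast hd.ne'
    rw [Complex.ofReal_div, eq_div_iff this]
    push_cast
    linear_combination h
  rw [hm]
  refine ⟨Complex.ofReal_im _, ?_⟩
  rw [Complex.ofReal_re]
  refine ⟨by positivity, ?_⟩
  rw [div_le_one hd]
  have : 0 ≤ α * g := by positivity
  linarith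

open scoped ComplexOrder in
lemma sq_aux {k : Type*} [Fintype k] (y : k → ℂ) :
    ∃ w : ℝ, 0 ≤ w ∧ star y ⬝ᵥ y = (w : ℂ) ∧ (y ≠ 0 → 0 < w) := by
  have h := dotProduct_star_self_nonneg y
  have h0 := (Complex.nonneg_iff.mp h)
  refine ⟨(star y ⬝ᵥ y).re, h0.1, ?_, ?_⟩
  · apply Complex.ext
    · simp
    · rw [← h0.2]; simp
  · intro hy
    exact (Complex.pos_iff.mp (dotProduct_star_self_pos_iff.mpr hy)).1

theorem closed_loop_marginally_stable
    (n m : ℕ) (hn : 0 < n) (hm : 0 < m)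
    (H : Matrix (Fin n ⊕ Fin m) (Fin n ⊕ Fin m) ℝ) (hH : H.PosSemidef)
    (α : ℝ) (hα : α ∈ Set.Ioo (0 : ℝ) 1) (κM : ℝ) (hκM : 0 < κM)
    (Lhat : Matrix (Fin n) (Fin n ⊕ Fin m) ℝ)
    (hLhat : Lhat = α •
      ((α • ((Bmat n m)ᵀ * H * Bmat n m) + κM • (1 : Matrix (Fin n) (Fin n) ℝ))⁻¹ *
        ((Bmat n m)ᵀ * H))) :
    ∀ μ ∈ spectrum ℂ
        (((1 : Matrix (Fin n ⊕ Fin m) (Fin n ⊕ Fin m) ℝ) - Bmat n m * Lhat).map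
          (algebraMap ℝ ℂ)),
      μ.im = 0 ∧ μ.re ∈ Set.Ioc (0 : ℝ) 1 := by
  obtain ⟨hα0, -⟩ := hα
  intro μ hμ
  have hB := Bmat_aux n m
  set B := Bmat n m with hBdef
  have hG : (Bᵀ * H * B).PosSemidef := by
    have := hH.conjTranspose_mul_mul_same B
    rwa [conjTranspose_eq_transpose_of_trivial] at this
  obtain ⟨X, hX⟩ := exists_sq_aux _ hG
  have hS : (α • (Bᵀ * H * B) + κM • (1 : Matrix (Fin n) (Fin n) ℝ)).PosDef :=
    Matrix.PosDef.posSemidef_add (hG.smul hα0.le) (Matrix.PosDef.one.smul hκM)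
  set S := α • (Bᵀ * H * B) + κM • (1 : Matrix (Fin n) (Fin n) ℝ) with hSdef
  have hSL : S * Lhat = α • (Bᵀ * H) := by
    rw [hLhat, Matrix.mul_smul, ← Matrix.mul_assoc,
      Matrix.mul_nonsing_inv _ ((Matrix.isUnit_iff_isUnit_det _).mp hS.isUnit), Matrix.one_mul]
  rw [← Matrix.spectrum_toLin', ← Module.End.hasEigenvalue_iff_mem_spectrum] at hμ
  obtain ⟨v, hv⟩ := hμ.exists_hasEigenvector
  have hv0 := hv.2
  have hv1 := hv.apply_eq_smul
  rw [Matrix.toLin'_apply] at hv1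
  by_cases hμ1 : μ = 1
  · subst hμ1; simp
  have h1 : 1 - μ ≠ 0 := sub_ne_zero.mpr (Ne.symm hμ1)
  let c : ℝ →+* ℂ := algebraMap ℝ ℂ
  -- `B (L v) = (1 - μ) v`
  have e1 : B.map c *ᵥ (Lhat.map c *ᵥ v) = (1 - μ) • v := by
    have : ((1 : Matrix (Fin n ⊕ Fin m) (Fin n ⊕ Fin m) ℝ) - B * Lhat).map c
        = 1 - B.map c * Lhat.map c := by
      rw [← RingHom.mapMatrix_apply, map_sub, map_one, RingHom.mapMatrix_apply, Matrix.map_mul]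
    rw [show (algebraMap ℝ ℂ) = c from rfl, this, Matrix.sub_mulVec, Matrix.one_mulVec,
      ← Matrix.mulVec_mulVec] at hv1
    rw [sub_smul, one_smul, ← hv1]; abel
  set y : Fin n → ℂ := (1 - μ)⁻¹ • (Lhat.map c *ᵥ v) with hy
  have e2 : v = B.map c *ᵥ y := by
    rw [hy, Matrix.mulVec_smul, e1, smul_smul, inv_mul_cancel₀ h1, one_smul]
  have hy0 : y ≠ 0 := by
    intro h; apply hv0; rw [e2, h, Matrix.mulVec_zero]
  have e3 : Lhat.map c *ᵥ (B.map c *ᵥ y) = (1 - μ) • y := by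
    rw [← e2, hy, smul_smul, mul_inv_cancel₀ h1, one_smul]
  have e4 : (S * Lhat * B).map c *ᵥ y = (1 - μ) • (S.map c *ᵥ y) := by
    rw [Matrix.map_mul, Matrix.map_mul, ← Matrix.mulVec_mulVec, ← Matrix.mulVec_mulVec, e3,
      Matrix.mulVec_smul]
  rw [hSL, Matrix.smul_mul, hSdef, hX] at e4
  have m1 : (α • (Xᵀ * X)).map c = (α : ℂ) • ((X.map c)ᴴ * X.map c) := by
    have : (X.map c)ᴴ = Xᵀ.map c := by
      ext i j; simp [c]
    rw [this, ← Matrix.map_mul]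
    ext i j; simp [c]
  have m2 : (α • (Xᵀ * X) + κM • (1 : Matrix (Fin n) (Fin n) ℝ)).map c
      = (α : ℂ) • ((X.map c)ᴴ * X.map c) + (κM : ℂ) • 1 := by
    rw [Matrix.map_add _ (map_add c), m1]
    congr 1
    ext i j; by_cases h : i = j <;> simp [c, Matrix.one_apply, h]
  rw [m1, m2] at e4
  obtain ⟨w, -, hw, hw'⟩ := sq_aux y
  obtain ⟨g, hg0, hg, -⟩ := sq_aux (X.map c *ᵥ y)
  have e5 : star y ⬝ᵥ (((X.map c)ᴴ * X.map c) *ᵥ y) = (g : ℂ) := by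
    rw [← hg, ← Matrix.mulVec_mulVec, Matrix.dotProduct_mulVec, Matrix.star_mulVec]
  have e6 := congrArg (fun z => star y ⬝ᵥ z) e4
  simp only [Matrix.add_mulVec, Matrix.smul_mulVec, Matrix.one_mulVec, dotProduct_smul,
    dotProduct_add, smul_eq_mul, e5, hw] at e6
  exact scalar_aux α κM g w hα0 hκM hg0 (hw' hy0) μ e6
end

section
/- Let S be a nonempty set and let α ∈ (0,1). Equip the bounded real-valued functions on S with the supremum distance d(J, J') = sup_{z ∈ S} |J(z) − J'(z)|. Let T_μ be a map from bounded functions on S to bounded functions on S that is α-Lipschitz with respect to d, i.e. d(T_μ J, T_μ J') ≤ α·d(J, J') for all bounded J, J'. Let J*, J̃ and J^μ be bounded functions on S, let ε ≥ 0, and suppose that: (i) J^μ is a fixed point of T_μ, i.e. T_μ J^μ = J^μ; (ii) d(J̃, J*) ≤ ε; and (iii) d(T_μ J̃, J*) ≤ α·ε. Then d(J^μ, J*) ≤ 2αε/(1−α). -/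
/-- The type of bounded real-valued functions on `S`. -/
def BddFun (S : Type*) : Type _ := {f : S → ℝ // ∃ C : ℝ, ∀ z : S, |f z| ≤ C}

/-- The supremum distance between two bounded functions on `S`. -/
noncomputable def supDist {S : Type*} (J J' : BddFun S) : ℝ :=
  ⨆ z : S, |J.1 z - J'.1 z|

theorem supDist_le_apply {S : Type*} (J J' : BddFun S) (z : S) :
    |J.1 z - J'.1 z| ≤ supDist J J' := by
  obtain ⟨C, hC⟩ := J.2
  obtain ⟨D, hD⟩ := J'.2
  refine le_ciSup (f := fun z : S => |J.1 z - J'.1 z|) ⟨C + D, ?_⟩ z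
  rintro _ ⟨w, rfl⟩
  exact (abs_sub _ _).trans (add_le_add (hC w) (hD w))

theorem supDist_tri {S : Type*} [Nonempty S] (J K L : BddFun S) :
    supDist J L ≤ supDist J K + supDist K L :=
  ciSup_le fun z => (abs_sub_le _ (K.1 z) _).trans
    (add_le_add (supDist_le_apply J K z) (supDist_le_apply K L z))

theorem supDist_symm {S : Type*} (J K : BddFun S) : supDist J K = supDist K J := by
  unfold supDist
  simp only [abs_sub_comm]

theorem approx_policy_performance_bound
    (S : Type*) [Nonempty S] (α : ℝ) (hα : α ∈ Set.Ioo (0 : ℝ) 1)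
    (Tμ : BddFun S → BddFun S)
    (hLip : ∀ J J' : BddFun S, supDist (Tμ J) (Tμ J') ≤ α * supDist J J')
    (Jstar Jtilde Jμ : BddFun S) (ε : ℝ) (hε : 0 ≤ ε)
    (hfix : Tμ Jμ = Jμ)
    (h2 : supDist Jtilde Jstar ≤ ε)
    (h3 : supDist (Tμ Jtilde) Jstar ≤ α * ε) :
    supDist Jμ Jstar ≤ 2 * α * ε / (1 - α) := by
  obtain ⟨h0, h1⟩ := hα
  have a := supDist_tri Jμ (Tμ Jtilde) Jstar
  have b := hLip Jμ Jtilde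
  rw [hfix] at b
  have c := supDist_tri Jμ Jstar Jtilde
  rw [supDist_symm Jstar Jtilde] at c
  rw [le_div_iff₀ (by linarith)]
  have e : α * supDist Jμ Jtilde ≤ α * (supDist Jμ Jstar + ε) :=
    mul_le_mul_of_nonneg_left (by linarith) h0.le
  linarith
end

section
/- Let K be a symmetric positive semidefinite matrix in ℝ^{(n+m)×(n+m)} satisfying the discounted algebraic Riccati equation K = αK − α²·K B (α BᵀKB + R)^{-1} BᵀK + Q, where Q is symmetric. Set k = (1/κ_M)·BᵀKB and q = (1/κ_M)·BᵀQB in ℝ^{n×n}. Then q·(α·k + I_n) = α·k² + (1−α)·k. -/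
open Matrix

theorem riccati_top_block_quadratic_identity
    (n m : ℕ) (hn : 0 < n) (hm : 0 < m)
    (α : ℝ) (hα : α ∈ Set.Ioo (0 : ℝ) 1) (κM : ℝ) (hκM : 0 < κM)
    (Q K : Matrix (Fin n ⊕ Fin m) (Fin n ⊕ Fin m) ℝ)
    (hQsymm : Qᵀ = Q) (hKsymm : Kᵀ = K) (hKpsd : K.PosSemidef)
    (hRic : K = α • K -
      α ^ 2 • (K * Bmat n m *
        (α • ((Bmat n m)ᵀ * K * Bmat n m) + κM • (1 : Matrix (Fin n) (Fin n) ℝ))⁻¹ *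
        (Bmat n m)ᵀ * K) + Q)
    (k q : Matrix (Fin n) (Fin n) ℝ)
    (hk : k = κM⁻¹ • ((Bmat n m)ᵀ * K * Bmat n m))
    (hq : q = κM⁻¹ • ((Bmat n m)ᵀ * Q * Bmat n m)) :
    q * (α • k + 1) = α • k ^ 2 + (1 - α) • k := by
  have hP : ((Bmat n m)ᵀ * K * Bmat n m).PosSemidef := by
    have h := hKpsd.conjTranspose_mul_mul_same (Bmat n m)
    rwa [Matrix.conjTranspose_eq_transpose_of_trivial] at h
  have hQ : (Bmat n m)ᵀ * Q * Bmat n m = (1 - α) • ((Bmat n m)ᵀ * K * Bmat n m) +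
      α ^ 2 • (((Bmat n m)ᵀ * K * Bmat n m) *
        (α • ((Bmat n m)ᵀ * K * Bmat n m) + κM • (1 : Matrix (Fin n) (Fin n) ℝ))⁻¹ *
        ((Bmat n m)ᵀ * K * Bmat n m)) := by
    generalize (α • ((Bmat n m)ᵀ * K * Bmat n m) +
      κM • (1 : Matrix (Fin n) (Fin n) ℝ))⁻¹ = T at hRic ⊢
    have h : Q = (1 - α) • K + α ^ 2 • (K * Bmat n m * T * (Bmat n m)ᵀ * K) := by
      have h2 : Q = K - (α • K - α ^ 2 • (K * Bmat n m * T * (Bmat n m)ᵀ * K)) :=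
        eq_sub_of_add_eq' hRic.symm
      rw [h2]
      module
    rw [h]
    simp only [Matrix.mul_add, Matrix.add_mul, Matrix.mul_smul, Matrix.smul_mul, Matrix.mul_assoc]
  rw [hQ] at hq
  clear hQ hRic
  generalize (Bmat n m)ᵀ * K * Bmat n m = P at *
  have hS : (α • P + κM • (1 : Matrix (Fin n) (Fin n) ℝ)).PosDef :=
    Matrix.PosDef.posSemidef_add (hP.smul hα.1.le) (Matrix.PosDef.one.smul hκM)
  have hdet : IsUnit (α • P + κM • (1 : Matrix (Fin n) (Fin n) ℝ)).det :=
    (Matrix.isUnit_iff_isUnit_det _).1 hS.isUnit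
  have hT := Matrix.nonsing_inv_mul _ hdet
  have hk1 : α • k + 1 = κM⁻¹ • (α • P + κM • (1 : Matrix (Fin n) (Fin n) ℝ)) := by
    rw [hk, smul_add, smul_smul κM⁻¹ κM, inv_mul_cancel₀ hκM.ne', one_smul, smul_comm]
  have hcomm : P * (α • P + κM • (1 : Matrix (Fin n) (Fin n) ℝ)) =
      (α • P + κM • (1 : Matrix (Fin n) (Fin n) ℝ)) * P := by
    simp [Matrix.mul_add, Matrix.add_mul]
  have hPS : P * (α • P + κM • (1 : Matrix (Fin n) (Fin n) ℝ)) = α • (P * P) + κM • P := by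
    simp [Matrix.mul_add]
  rw [hk1, hq, hk]
  generalize (α • P + κM • (1 : Matrix (Fin n) (Fin n) ℝ))⁻¹ = T at *
  generalize (α • P + κM • (1 : Matrix (Fin n) (Fin n) ℝ)) = S at *
  have hTPS : P * T * P * S = P * P := by
    rw [Matrix.mul_assoc (P * T), hcomm, Matrix.mul_assoc P T, ← Matrix.mul_assoc T, hT,
      Matrix.one_mul]
  simp only [pow_two k, pow_two (κM⁻¹ • P), Matrix.smul_mul, Matrix.mul_smul, Matrix.add_mul,
    hTPS, hPS]
  match_scalars <;> field_simp <;> ring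
end

section
/- Let K_f ∈ ℝ^{n×n} be a symmetric positive definite matrix whose off-diagonal entries are all nonpositive, let α ∈ (0,1) and κ_M > 0, and define M = (1−α)·I_n + α²·K_f·(α·K_f + κ_M·I_n)^{-1}. Then M is invertible and its inverse M^{-1} is entrywise nonnegative. (Equivalently, M = I_n − α·κ_M·(α·K_f + κ_M·I_n)^{-1} is a nonsingular M-matrix.) -/
open Matrix

lemma posdef_Z_inv_nonneg (n : ℕ) (C : Matrix (Fin n) (Fin n) ℝ) (hC : C.PosDef)
    (hoff : ∀ i j, i ≠ j → C i j ≤ 0) (x : Fin n → ℝ) (hx : ∀ i, 0 ≤ (C *ᵥ x) i) :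
    ∀ i, 0 ≤ x i := by
  set m : Fin n → ℝ := fun i => max (-x i) 0 with hm
  have hm0 : ∀ i, 0 ≤ m i := fun i => le_max_right _ _
  have hmx : ∀ i, 0 ≤ x i + m i := fun i => by
    have := le_max_left (-x i) 0
    simp only [hm]; linarith
  have hmm : ∀ i, m i * (x i + m i) = 0 := fun i => by
    simp only [hm]
    rcases le_total (-x i) 0 with h | h
    · rw [max_eq_right h]; ring
    · rw [max_eq_left h]; ring
  have h1 : 0 ≤ m ⬝ᵥ (C *ᵥ x) := Finset.sum_nonneg fun i _ => mul_nonneg (hm0 i) (hx i)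
  have h2 : m ⬝ᵥ (C *ᵥ (x + m)) ≤ 0 := by
    simp only [dotProduct, mulVec, Finset.mul_sum]
    refine Finset.sum_nonpos fun i _ => Finset.sum_nonpos fun j _ => ?_
    by_cases h : i = j
    · subst h
      have : m i * (C i i * (x + m) i) = C i i * (m i * (x i + m i)) := by
        simp only [Pi.add_apply]; ring
      rw [this, hmm]; simp
    · exact mul_nonpos_of_nonneg_of_nonpos (hm0 i)
        (mul_nonpos_of_nonpos_of_nonneg (hoff i j h) (hmx j))
  rw [mulVec_add, dotProduct_add] at h2
  have h3 : m = 0 := by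
    by_contra hne
    have := hC.dotProduct_mulVec_pos hne
    simp only [star_trivial] at this
    linarith
  intro i
  have := hmx i
  rw [h3] at this
  simpa using this

theorem inverse_nonneg_of_M_matrix_combination
    (n : ℕ) (Kf : Matrix (Fin n) (Fin n) ℝ)
    (hKsymm : Kfᵀ = Kf) (hKpd : Kf.PosDef)
    (hKoff : ∀ i j, i ≠ j → Kf i j ≤ 0)
    (α κM : ℝ) (hα : α ∈ Set.Ioo (0 : ℝ) 1) (hκM : 0 < κM)
    (M : Matrix (Fin n) (Fin n) ℝ)
    (hM : M = (1 - α) • (1 : Matrix (Fin n) (Fin n) ℝ) +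
      α ^ 2 • (Kf * (α • Kf + κM • (1 : Matrix (Fin n) (Fin n) ℝ))⁻¹)) :
    IsUnit M ∧ ∀ i j, 0 ≤ M⁻¹ i j := by
  obtain ⟨ha0, ha1⟩ := hα
  have key : ∀ c : ℝ, 0 < c → (α • Kf + c • (1 : Matrix (Fin n) (Fin n) ℝ)).PosDef :=
    fun c hc => (hKpd.smul ha0).add (PosDef.one.smul hc)
  have hc : 0 < (1 - α) * κM := mul_pos (by linarith) hκM
  have hB := key κM hκM
  have hC := key _ hc
  set B := α • Kf + κM • (1 : Matrix (Fin n) (Fin n) ℝ) with hBd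
  set C := α • Kf + ((1 - α) * κM) • (1 : Matrix (Fin n) (Fin n) ℝ) with hCd
  have hBB : B * B⁻¹ = 1 := mul_nonsing_inv _ ((isUnit_iff_isUnit_det _).1 hB.isUnit)
  have hBB' : B⁻¹ * B = 1 := nonsing_inv_mul _ ((isUnit_iff_isUnit_det _).1 hB.isUnit)
  have hCC : C * C⁻¹ = 1 := mul_nonsing_inv _ ((isUnit_iff_isUnit_det _).1 hC.isUnit)
  have hMC : M = C * B⁻¹ := by
    have e : C = (1 - α) • B + α ^ 2 • Kf := by
      rw [hCd, hBd]; module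
    rw [hM, e, add_mul, smul_mul_assoc, smul_mul_assoc, hBB]
  have hBC : B = C + (α * κM) • (1 : Matrix (Fin n) (Fin n) ℝ) := by
    rw [hCd, hBd]; module
  have hMi : M * (B * C⁻¹) = 1 := by
    rw [hMC, mul_assoc, ← mul_assoc B⁻¹, hBB', one_mul, hCC]
  refine ⟨IsUnit.of_mul_eq_one _ hMi, fun i j => ?_⟩
  rw [inv_eq_right_inv hMi, hBC, add_mul, hCC, smul_mul_assoc, one_mul]
  have hCi : 0 ≤ C⁻¹ i j := by
    refine posdef_Z_inv_nonneg n C hC ?_ (fun k => C⁻¹ k j) ?_ i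
    · intro i j h
      have := hKoff i j h
      simp only [hCd, Matrix.add_apply, Matrix.smul_apply, one_apply_ne h, smul_eq_mul, mul_zero, add_zero]
      exact mul_nonpos_of_nonneg_of_nonpos ha0.le this
    · intro k
      have : (C *ᵥ fun k => C⁻¹ k j) k = (C * C⁻¹) k j := rfl
      rw [this, hCC, one_apply]
      split_ifs <;> norm_num
  have h1 : (0 : ℝ) ≤ (1 : Matrix (Fin n) (Fin n) ℝ) i j := by
    rw [one_apply]; split_ifs <;> norm_num
  simp only [Matrix.add_apply, Matrix.smul_apply, smul_eq_mul]
  positivity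
end

section
/- Let A ∈ ℝ^{n×n} be symmetric and diagonally dominant with nonnegative diagonal, i.e. A_{ii} ≥ Σ_{j≠i} |A_{ij}| for every i. Let D ∈ ℝ^{n×n} be diagonal with D_{ii} > 0 and D_{ii}·A_{ii} < 1 for every i. Then every complex eigenvalue of the product D·A is real and lies in the half-open interval [0, 2); consequently every complex eigenvalue of I_n − D·A is real and lies in (−1, 1]. -/
open Matrix

lemma aux_first
    (n : ℕ) (A D : Matrix (Fin n) (Fin n) ℝ)
    (hAsymm : Aᵀ = A)
    (hDD : ∀ i, ∑ j ∈ Finset.univ.filter (fun j => j ≠ i), |A i j| ≤ A i i)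
    (hDdiag : ∀ i j, i ≠ j → D i j = 0)
    (hDpos : ∀ i, 0 < D i i)
    (hDA : ∀ i, D i i * A i i < 1) (μ : ℂ)
    (hμ : μ ∈ spectrum ℂ ((D * A).map (algebraMap ℝ ℂ))) :
        μ.im = 0 ∧ μ.re ∈ Set.Ico (0 : ℝ) 2 := by
  have hent : ∀ i j, (D * A) i j = D i i * A i j := by
    intro i j
    rw [Matrix.mul_apply, Finset.sum_eq_single i]
    · intro b _ hb
      rw [hDdiag i b (Ne.symm hb), zero_mul]
    · simp
  have hev : Module.End.HasEigenvalue
      (Matrix.toLin' ((D * A).map (algebraMap ℝ ℂ))) μ := by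
    rw [Module.End.hasEigenvalue_iff_mem_spectrum, Matrix.spectrum_toLin']
    exact hμ
  have him : μ.im = 0 := by
    obtain ⟨v, hv, hv0⟩ := hev.exists_hasEigenvector
    rw [Module.End.mem_eigenspace_iff, Matrix.toLin'_apply] at hv
    have h1 : ∀ i, (D i i : ℂ) * ∑ j, (A i j : ℂ) * v j = μ * v i := by
      intro i
      have := congrFun hv i
      simp only [Matrix.mulVec, dotProduct, Matrix.map_apply, hent, Pi.smul_apply,
        smul_eq_mul] at this
      rw [← this, Finset.mul_sum]
      refine Finset.sum_congr rfl fun j _ => ?_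
      simp [mul_assoc]
    set S : ℂ := ∑ i, ∑ j, star (v i) * (A i j : ℂ) * v j with hS
    have hSs : star S = S := by
      rw [hS]
      simp only [star_sum]
      rw [Finset.sum_comm]
      refine Finset.sum_congr rfl fun i _ => Finset.sum_congr rfl fun j _ => ?_
      have : A j i = A i j := congrFun (congrFun hAsymm i) j
      simp [this]
      ring
    have hST : S = μ * ((∑ i, Complex.normSq (v i) / D i i : ℝ) : ℂ) := by
      rw [hS]
      push_cast
      rw [Finset.mul_sum]
      refine Finset.sum_congr rfl fun i _ => ?_
      have hd : (D i i : ℂ) ≠ 0 := by exact_mod_cast (hDpos i).ne'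
      have h2 : ∑ j, star (v i) * (A i j : ℂ) * v j
          = star (v i) * ∑ j, (A i j : ℂ) * v j := by
        rw [Finset.mul_sum]
        exact Finset.sum_congr rfl fun j _ => by ring
      rw [h2, Complex.normSq_eq_conj_mul_self]
      field_simp
      have h3 := h1 i
      simp only [Complex.star_def]
      linear_combination (starRingEnd ℂ (v i)) * h3
    have hT : 0 < ∑ i, Complex.normSq (v i) / D i i := by
      obtain ⟨i, hi⟩ := Function.ne_iff.mp hv0
      refine Finset.sum_pos' (fun j _ => div_nonneg (Complex.normSq_nonneg _) (hDpos j).le)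
        ⟨i, Finset.mem_univ _, div_pos (Complex.normSq_pos.mpr hi) (hDpos i)⟩
    have h4 : S.im = 0 := Complex.conj_eq_iff_im.mp hSs
    rw [hST, Complex.im_mul_ofReal] at h4
    exact (mul_eq_zero.mp h4).resolve_right hT.ne'
  refine ⟨him, ?_⟩
  obtain ⟨k, hk⟩ := eigenvalue_mem_ball hev
  rw [Metric.mem_closedBall, dist_eq_norm] at hk
  have hsum : ∑ j ∈ Finset.univ.erase k, ‖((D * A).map (algebraMap ℝ ℂ)) k j‖
      ≤ D k k * A k k := by
    refine le_trans (le_of_eq ?_) (mul_le_mul_of_nonneg_left (hDD k) (hDpos k).le)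
    rw [Finset.mul_sum]
    refine Finset.sum_congr (by ext; simp) fun j _ => ?_
    simp [hent, abs_of_pos (hDpos k)]
  have h5 := (Complex.abs_re_le_norm _).trans (hk.trans hsum)
  simp only [Matrix.map_apply, hent, Complex.sub_re, Complex.coe_algebraMap,
    Complex.ofReal_re] at h5
  have h6 := abs_le.mp h5
  have h7 := hDA k
  constructor <;> linarith [h6.1, h6.2]

theorem eigenvalues_of_scaled_diagonally_dominant
    (n : ℕ) (A D : Matrix (Fin n) (Fin n) ℝ)
    (hAsymm : Aᵀ = A)
    (hDD : ∀ i, ∑ j ∈ Finset.univ.filter (fun j => j ≠ i), |A i j| ≤ A i i)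
    (hDdiag : ∀ i j, i ≠ j → D i j = 0)
    (hDpos : ∀ i, 0 < D i i)
    (hDA : ∀ i, D i i * A i i < 1) :
    (∀ μ ∈ spectrum ℂ ((D * A).map (algebraMap ℝ ℂ)),
        μ.im = 0 ∧ μ.re ∈ Set.Ico (0 : ℝ) 2) ∧
      (∀ μ ∈ spectrum ℂ
          (((1 : Matrix (Fin n) (Fin n) ℝ) - D * A).map (algebraMap ℝ ℂ)),
        μ.im = 0 ∧ μ.re ∈ Set.Ioc (-1 : ℝ) 1) := by
  have H := aux_first n A D hAsymm hDD hDdiag hDpos hDA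
  refine ⟨H, fun μ hμ => ?_⟩
  have h1 : 1 - μ ∈ spectrum ℂ ((D * A).map (algebraMap ℝ ℂ)) := by
    rw [spectrum.mem_iff] at hμ ⊢
    intro h
    apply hμ
    have e : algebraMap ℂ (Matrix (Fin n) (Fin n) ℂ) μ
        - ((1 : Matrix (Fin n) (Fin n) ℝ) - D * A).map (algebraMap ℝ ℂ)
        = -(algebraMap ℂ (Matrix (Fin n) (Fin n) ℂ) (1 - μ)
          - (D * A).map (algebraMap ℝ ℂ)) := by
      rw [Matrix.map_sub _ (by simp), Matrix.map_one _ (by simp) (by simp), map_sub, map_one]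
      abel
    rw [e]
    exact h.neg
  obtain ⟨h2, h3, h4⟩ := H _ h1
  simp only [Complex.sub_im, Complex.one_im, Complex.sub_re, Complex.one_re] at h2 h3 h4
  exact ⟨by linarith, by linarith, by linarith⟩
end

section
/- Let N, m ≥ 1 and let L ∈ ℝ^{(N+m)×(N+m)} be a weighted graph Laplacian: L is symmetric, L_{ij} ≤ 0 for all i ≠ j, and every row sum of L is zero (so L_{ii} = Σ_{j≠i} |L_{ij}|). Let L_f ∈ ℝ^{N×N} be the top-left N×N block of L and L_{fl} ∈ ℝ^{N×m} the top-right N×m block. Let c > 0 and let D ∈ ℝ^{N×N} be the diagonal matrix with D_{ii} = 1/(c + L_{ii}) for i = 1,…,N. Then every complex eigenvalue of the block matrix with blocks [[I_N − D·L_f, −D·L_{fl}], [0_{m×N}, I_m]] is real and lies in the half-open interval (−1, 1]; in particular the corresponding closed-loop dynamics are marginally stable. -/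
open Matrix

theorem lap_quad {n : Type*} [Fintype n] [DecidableEq n] (L : Matrix n n ℝ)
    (hs : ∀ i j, L j i = L i j) (hoff : ∀ i j, i ≠ j → L i j ≤ 0)
    (hrow : ∀ i, ∑ j, L i j = 0) (a : n → ℝ) :
    0 ≤ ∑ i, ∑ j, L i j * (a i * a j) ∧
      ∑ i, ∑ j, L i j * (a i * a j) ≤ 2 * ∑ i, L i i * a i ^ 2 := by
  have h1 : ∑ i, ∑ j, L i j * a i ^ 2 = 0 := by
    simp [← Finset.sum_mul, hrow]
  have h2 : ∑ i, ∑ j, L i j * a j ^ 2 = 0 := by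
    rw [Finset.sum_comm]
    simp only [fun i j => hs i j]
    exact h1
  have h3 : ∑ i, ∑ j, L i j * (a i - a j) ^ 2 ≤ 0 := by
    refine Finset.sum_nonpos fun i _ => Finset.sum_nonpos fun j _ => ?_
    by_cases h : i = j
    · simp [h]
    · exact mul_nonpos_of_nonpos_of_nonneg (hoff i j h) (sq_nonneg _)
  have h4 : ∑ i, ∑ j, L i j * (a i + a j) ^ 2 ≤ ∑ i, 4 * (L i i * a i ^ 2) := by
    refine Finset.sum_le_sum fun i _ => ?_
    have : ∑ j, L i j * (a i + a j) ^ 2 ≤ ∑ j, if i = j then 4 * (L i i * a i ^ 2) else 0 := by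
      refine Finset.sum_le_sum fun j _ => ?_
      split_ifs with h
      · subst h; apply le_of_eq; ring
      · exact mul_nonpos_of_nonpos_of_nonneg (hoff i j h) (sq_nonneg _)
    simpa using this
  have e3 : ∑ i, ∑ j, L i j * (a i - a j) ^ 2 = ∑ i, ∑ j, L i j * a i ^ 2
      + ∑ i, ∑ j, L i j * a j ^ 2 - 2 * ∑ i, ∑ j, L i j * (a i * a j) := by
    simp only [Finset.mul_sum, ← Finset.sum_add_distrib, ← Finset.sum_sub_distrib]
    refine Finset.sum_congr rfl fun i _ => Finset.sum_congr rfl fun j _ => by ring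
  have e4 : ∑ i, ∑ j, L i j * (a i + a j) ^ 2 = ∑ i, ∑ j, L i j * a i ^ 2
      + ∑ i, ∑ j, L i j * a j ^ 2 + 2 * ∑ i, ∑ j, L i j * (a i * a j) := by
    simp only [Finset.mul_sum, ← Finset.sum_add_distrib]
    refine Finset.sum_congr rfl fun i _ => Finset.sum_congr rfl fun j _ => by ring
  rw [← Finset.mul_sum] at h4
  constructor <;> linarith

theorem lap_eig {n : Type*} [Fintype n] [DecidableEq n] (L : Matrix n n ℝ)
    (hs : ∀ i j, L j i = L i j) (hoff : ∀ i j, i ≠ j → L i j ≤ 0)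
    (hrow : ∀ i, ∑ j, L i j = 0) (c : ℝ) (hc : 0 < c) (z : n → ℂ) (hz : z ≠ 0) (μ : ℂ)
    (h : ∀ i, z i ≠ 0 → ∑ j, (L i j : ℂ) * z j = (1 - μ) * ((c + L i i : ℝ) : ℂ) * z i) :
    μ.im = 0 ∧ μ.re ∈ Set.Ioc (-1 : ℝ) 1 := by
  have hdiag : ∀ i, 0 ≤ L i i := by
    intro i
    have := hrow i
    rw [← Finset.add_sum_erase _ _ (Finset.mem_univ i)] at this
    have h2 : ∑ j ∈ Finset.univ.erase i, L i j ≤ 0 :=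
      Finset.sum_nonpos fun j hj => hoff i j (Finset.ne_of_mem_erase hj).symm
    linarith
  set s : ℝ := ∑ i, (c + L i i) * ((z i).re ^ 2 + (z i).im ^ 2) with hsdef
  set t : ℝ := ∑ i, ((z i).re ^ 2 + (z i).im ^ 2) with ht
  have htpos : 0 < t := by
    obtain ⟨i, hi⟩ := Function.ne_iff.mp hz
    refine Finset.sum_pos' (fun i _ => by positivity) ⟨i, Finset.mem_univ _, ?_⟩
    have := Complex.normSq_pos.mpr hi
    rw [Complex.normSq_apply] at this
    nlinarith
  obtain ⟨ha1, ha2⟩ := lap_quad L hs hoff hrow (fun i => (z i).re)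
  obtain ⟨hb1, hb2⟩ := lap_quad L hs hoff hrow (fun i => (z i).im)
  have hse : s = c * t + (∑ i, L i i * (z i).re ^ 2 + ∑ i, L i i * (z i).im ^ 2) := by
    simp only [hsdef, ht, Finset.mul_sum, ← Finset.sum_add_distrib]
    exact Finset.sum_congr rfl fun i _ => by ring
  have hd1 : 0 ≤ ∑ i, L i i * (z i).re ^ 2 :=
    Finset.sum_nonneg fun i _ => mul_nonneg (hdiag i) (sq_nonneg _)
  have hd2 : 0 ≤ ∑ i, L i i * (z i).im ^ 2 :=
    Finset.sum_nonneg fun i _ => mul_nonneg (hdiag i) (sq_nonneg _)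
  have hct : 0 < c * t := mul_pos hc htpos
  have hspos : 0 < s := by linarith
  have key : ∑ i, ∑ j, (L i j : ℂ) * (star (z i) * z j) = (1 - μ) * (s : ℂ) := by
    rw [hsdef, Complex.ofReal_sum, Finset.mul_sum]
    refine Finset.sum_congr rfl fun i _ => ?_
    by_cases hi : z i = 0
    · simp [hi]
    · have e : ∑ j, (L i j : ℂ) * (star (z i) * z j) = star (z i) * ∑ j, (L i j : ℂ) * z j := by
        rw [Finset.mul_sum]; exact Finset.sum_congr rfl fun j _ => by ring
      rw [e, h i hi]
      have e2 : (((z i).re ^ 2 + (z i).im ^ 2 : ℝ) : ℂ) = star (z i) * z i := by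
        apply Complex.ext <;> simp [pow_two] <;> ring
      rw [Complex.ofReal_mul, e2]; ring
  have kre := congrArg Complex.re key
  have kim := congrArg Complex.im key
  simp only [Complex.re_sum, Complex.im_sum, Complex.re_ofReal_mul, Complex.im_ofReal_mul,
    Complex.re_mul_ofReal, Complex.im_mul_ofReal, Complex.mul_re, Complex.mul_im,
    Complex.star_def, Complex.conj_re, Complex.conj_im, Complex.sub_re, Complex.sub_im,
    Complex.one_re, Complex.one_im, Complex.ofReal_re, Complex.ofReal_im, mul_zero, zero_mul,
    sub_zero, zero_add, add_zero] at kre kim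
  have e1 : ∑ i, ∑ j, L i j * ((z i).re * (z j).re - -(z i).im * (z j).im)
      = ∑ i, ∑ j, L i j * ((z i).re * (z j).re) + ∑ i, ∑ j, L i j * ((z i).im * (z j).im) := by
    simp only [← Finset.sum_add_distrib]
    refine Finset.sum_congr rfl fun i _ => Finset.sum_congr rfl fun j _ => by ring
  have e2 : ∑ i, ∑ j, L i j * ((z i).re * (z j).im + -(z i).im * (z j).re) = 0 := by
    have a1 : ∑ i, ∑ j, L i j * ((z i).re * (z j).im + -(z i).im * (z j).re)
      = ∑ i, ∑ j, L i j * ((z i).re * (z j).im) - ∑ i, ∑ j, L i j * ((z i).im * (z j).re) := by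
      simp only [← Finset.sum_sub_distrib]
      refine Finset.sum_congr rfl fun i _ => Finset.sum_congr rfl fun j _ => by ring
    rw [a1, sub_eq_zero, Finset.sum_comm]
    refine Finset.sum_congr rfl fun i _ => Finset.sum_congr rfl fun j _ => ?_
    rw [hs i j]; ring
  rw [e1] at kre
  rw [e2] at kim
  refine ⟨?_, ?_, ?_⟩
  · have : μ.im * s = 0 := by linarith
    exact (mul_eq_zero.mp this).resolve_right hspos.ne'
  · by_contra hcon
    push Not at hcon
    nlinarith
  · by_contra hcon
    push Not at hcon
    nlinarith

theorem EAPIII_closed_loop_marginally_stable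
    (N m : ℕ) (hN : 0 < N) (hm : 0 < m)
    (L : Matrix (Fin N ⊕ Fin m) (Fin N ⊕ Fin m) ℝ)
    (hLsymm : Lᵀ = L)
    (hLoff : ∀ i j, i ≠ j → L i j ≤ 0)
    (hLrow : ∀ i, ∑ j, L i j = 0)
    (c : ℝ) (hc : 0 < c)
    (D : Matrix (Fin N) (Fin N) ℝ)
    (hD : D = Matrix.diagonal (fun i => (c + L (Sum.inl i) (Sum.inl i))⁻¹))
    (M : Matrix (Fin N ⊕ Fin m) (Fin N ⊕ Fin m) ℝ)
    (hM : M = Matrix.fromBlocks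
      ((1 : Matrix (Fin N) (Fin N) ℝ) - D * L.toBlocks₁₁)
      (-(D * L.toBlocks₁₂))
      (0 : Matrix (Fin m) (Fin N) ℝ)
      (1 : Matrix (Fin m) (Fin m) ℝ)) :
    ∀ μ ∈ spectrum ℂ (M.map (algebraMap ℝ ℂ)),
      μ.im = 0 ∧ μ.re ∈ Set.Ioc (-1 : ℝ) 1 := by
  intro μ hμ
  rw [← Matrix.spectrum_toLin', ← Module.End.hasEigenvalue_iff_mem_spectrum] at hμ
  obtain ⟨v, hv⟩ := hμ.exists_hasEigenvector
  have hv0 := hv.2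
  have hv1 := hv.apply_eq_smul
  rw [Matrix.toLin'_apply] at hv1
  have hs : ∀ i j, L j i = L i j := fun i j => congrFun (congrFun hLsymm i) j
  have hdiag : ∀ i, 0 ≤ L i i := by
    intro i
    have := hLrow i
    rw [← Finset.add_sum_erase _ _ (Finset.mem_univ i)] at this
    have h2 : ∑ j ∈ Finset.univ.erase i, L i j ≤ 0 :=
      Finset.sum_nonpos fun j hj => hLoff i j (Finset.ne_of_mem_erase hj).symm
    linarith
  by_cases hy : ∃ k, v (Sum.inr k) ≠ 0
  · obtain ⟨k, hk⟩ := hy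
    have := congrFun hv1 (Sum.inr k)
    simp [hM, Matrix.mulVec, dotProduct, Matrix.one_apply, apply_ite Complex.ofReal] at this
    have h1 : μ = 1 := by
      have : (μ - 1) * v (Sum.inr k) = 0 := by linear_combination (-1 : ℂ) * this
      exact sub_eq_zero.mp ((mul_eq_zero.mp this).resolve_right hk)
    subst h1
    simp
  · push Not at hy
    refine lap_eig L hs hLoff hLrow c hc v hv0 μ ?_
    rintro (i | k) hi
    · have := congrFun hv1 (Sum.inl i)
      have hne : ((c + L (Sum.inl i) (Sum.inl i) : ℝ) : ℂ) ≠ 0 := by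
        have := hdiag (Sum.inl i)
        exact_mod_cast (by linarith : c + L (Sum.inl i) (Sum.inl i) > 0).ne'
      simp only [hM, hD, Matrix.mulVec, dotProduct, Fintype.sum_sum_type, hy, mul_zero,
        Finset.sum_const_zero, add_zero, Matrix.map_apply, Matrix.fromBlocks_apply₁₁,
        Matrix.sub_apply, Matrix.diagonal_mul, Matrix.toBlocks₁₁, Matrix.of_apply,
        Complex.coe_algebraMap, Complex.ofReal_sub, Complex.ofReal_mul, sub_mul,
        Finset.sum_sub_distrib, Matrix.one_apply, Pi.smul_apply, smul_eq_mul,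
        Complex.ofReal_inv, mul_assoc, ← Finset.mul_sum] at this
      simp only [apply_ite Complex.ofReal, Complex.ofReal_one, Complex.ofReal_zero, ite_mul,
        one_mul, zero_mul, Finset.sum_ite_eq, Finset.mem_univ, if_true] at this
      simp only [Fintype.sum_sum_type, hy, mul_zero, Finset.sum_const_zero, add_zero]
      field_simp at this
      linear_combination -this
    · exact absurd (hy k) hi
end
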